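/- Let (K,M) be a cellular category. Suppose (f, g, u, v) is a cellular square, where f: A → B, g: A → C, u: B → D, v: C → D are in M, and suppose (v, g', u', v') is a cellular square, where g': C → E, u': D → F, v': E → F are in M and u' ∘ v = v' ∘ g'. Then the horizontally composed square (f, g' ∘ g, u' ∘ u, v') is a cellular square. (Cellular squares are transitive.) -/

import Mathlib

open CategoryTheory CategoryTheory.Limits

universe v u

namespace Paper

/-- A preorder `I` is `κ`-directed if every subset of cardinality `< κ` has an upper bound. -/
def IsCardinalDirected (κ : Cardinal.{v}) (I : Type v) [Preorder I] : Prop :=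
  ∀ S : Set I, Cardinal.mk S < κ → ∃ j : I, ∀ i ∈ S, i ≤ j

section Cellular

variable {K : Type u} [Category.{v} K]

/-- The canonical cocone, with apex `F.obj j`, over the restriction of a chain `F` to `Set.Iio j`. -/
@[simps]
def chainCocone {J : Type v} [Preorder J] (F : J ⥤ K) (j : J) :
    Cocone ((Monotone.functor (f := (Subtype.val : Set.Iio j → J)) fun _ _ h => h) ⋙ F) where
  pt := F.obj j
  ι :=
    { app := fun i => F.map (homOfLE i.2.le)
      naturality := fun i i' h => by
        dsimp [Monotone.functor]
        rw [Category.comp_id, ← F.map_comp]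
        rfl }

variable [HasColimits K]

/-- `M` is closed under transfinite compositions: for every smooth chain indexed by a
well-ordered set, all of whose successor maps lie in `M`, the canonical morphism from the
first object to the colimit lies in `M`. -/
def TransfiniteClosed (M : MorphismProperty K) : Prop :=
  ∀ (J : Type v) (_ : LinearOrder J) (_ : OrderBot J) (_ : SuccOrder J) (_ : WellFoundedLT J)
    (F : J ⥤ K),
    (∀ j : J, Order.IsSuccLimit j → Nonempty (IsColimit (chainCocone F j))) →
    (∀ j : J, ¬IsMax j → M (F.map (homOfLE (Order.le_succ j)))) →
    ∀ c : Cocone F, IsColimit c → M (c.ι.app ⊥)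

/-- A cellular category: a cocomplete category equipped with a class of morphisms containing
all isomorphisms and closed under pushouts and transfinite compositions. -/
class CellularCategory (K : Type u) [Category.{v} K] [HasColimits K]
    (M : MorphismProperty K) : Prop where
  iso_mem : ∀ {X Y : K} (f : X ⟶ Y), IsIso f → M f
  comp_mem : ∀ {X Y Z : K} (f : X ⟶ Y) (g : Y ⟶ Z), M f → M g → M (f ≫ g)
  pushout_mem : ∀ {A B A' P : K} (f : A ⟶ B) (g : A ⟶ A') (u : B ⟶ P) (v : A' ⟶ P),
    IsPushout f g u v → M f → M v
  transfinite_mem : TransfiniteClosed M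

/-- A commutative square `(f, g, u, v)` is cellular if the induced morphism from the pushout
of the span `(f, g)` to the lower right corner lies in `M`. -/
def IsCellularSquare (M : MorphismProperty K) {A B C D : K}
    (f : A ⟶ B) (g : A ⟶ C) (u : B ⟶ D) (v : C ⟶ D) : Prop :=
  ∃ w : f ≫ u = g ≫ v, M (pushout.desc u v w)

/-- A morphism of the arrow category is a cellular square (all four morphisms in `M` and
the induced morphism from the pushout in `M`). -/
def CellularHom (M : MorphismProperty K) : ∀ ⦃X Y : Arrow K⦄, (X ⟶ Y) → Prop :=
  fun X Y sq => M sq.left ∧ M sq.right ∧ IsCellularSquare M sq.left X.hom Y.hom sq.right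

/-- `(K, M)` is coherent. -/
def Coherent (M : MorphismProperty K) : Prop :=
  ∀ {X Y Z : K} (f : X ⟶ Y) (g : Y ⟶ Z), M (f ≫ g) → M g → M f


/-- `(K, M)` has effective unions: pullbacks of cospans in `M` exist with projections in `M`,
and every pullback square of morphisms of `M` is a cellular square. -/
def EffectiveUnions (M : MorphismProperty K) : Prop :=
  (∀ {B C D : K} (u : B ⟶ D) (v : C ⟶ D), M u → M v →
    ∃ (A : K) (f : A ⟶ B) (g : A ⟶ C), M f ∧ M g ∧ IsPullback f g u v) ∧
  ∀ {A B C D : K} (f : A ⟶ B) (g : A ⟶ C) (u : B ⟶ D) (v : C ⟶ D),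
    M f → M g → M u → M v → IsPullback f g u v → IsCellularSquare M f g u v

end Cellular

section Retract

variable {K : Type u} [Category.{v} K]

/-- `f` is a retract of `f'` in the arrow category. -/
def IsArrowRetract {A B A' B' : K} (f : A ⟶ B) (f' : A' ⟶ B') : Prop :=
  ∃ (iA : A ⟶ A') (iB : B ⟶ B') (rA : A' ⟶ A) (rB : B' ⟶ B),
    iA ≫ rA = 𝟙 A ∧ iB ≫ rB = 𝟙 B ∧ iA ≫ f' = f ≫ iB ∧ rA ≫ f = f' ≫ rB

/-- `M` is closed under retracts in the arrow category. -/
def RetractClosed (M : MorphismProperty K) : Prop :=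
  ∀ {A B A' B' : K} (f : A ⟶ B) (f' : A' ⟶ B'), IsArrowRetract f f' → M f' → M f

end Retract

section Sub

variable {C : Type u} [Category.{v} C]
variable (Obj : C → Prop) (Hom : ∀ ⦃X Y : C⦄, (X ⟶ Y) → Prop)

/-- `F` is a diagram lying in the (not necessarily full) subcategory determined by
the object predicate `Obj` and the morphism predicate `Hom`. -/
def SubDiagram {I : Type*} [Preorder I] (F : I ⥤ C) : Prop :=
  (∀ i, Obj (F.obj i)) ∧ ∀ (i j : I) (h : i ⟶ j), Hom (F.map h)

/-- `c` is a colimit cocone for `F` in the subcategory determined by `Obj` and `Hom`: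
its apex and legs lie in the subcategory, and it enjoys the universal property with
respect to all cocones lying in the subcategory. -/
def SubIsColimit {I : Type*} [Preorder I] {F : I ⥤ C} (c : Cocone F) : Prop :=
  Obj c.pt ∧ (∀ i, Hom (c.ι.app i)) ∧
    ∀ c' : Cocone F, Obj c'.pt → (∀ i, Hom (c'.ι.app i)) →
      ∃ m : c.pt ⟶ c'.pt, Hom m ∧ (∀ i, c.ι.app i ≫ m = c'.ι.app i) ∧
        ∀ m' : c.pt ⟶ c'.pt, Hom m' → (∀ i, c.ι.app i ≫ m' = c'.ι.app i) → m' = m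

/-- `X` is a `κ`-presentable object of the subcategory determined by `Obj` and `Hom`. -/
def SubPresentable (κ : Cardinal.{v}) (X : C) : Prop :=
  ∀ I : Preord.{v}, IsCardinalDirected κ I →
    ∀ F : I ⥤ C, SubDiagram Obj Hom F → ∀ c : Cocone F, SubIsColimit Obj Hom c →
      (∀ h : X ⟶ c.pt, Hom h → ∃ (i : I) (g : X ⟶ F.obj i), Hom g ∧ g ≫ c.ι.app i = h) ∧
      (∀ (i : I) (g g' : X ⟶ F.obj i), Hom g → Hom g' → g ≫ c.ι.app i = g' ≫ c.ι.app i →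
        ∃ (j : I) (hij : i ≤ j), g ≫ F.map hij.hom = g' ≫ F.map hij.hom)

/-- The subcategory determined by `Obj` and `Hom` has `κ`-directed colimits. -/
def SubHasDirectedColimits (κ : Cardinal.{v}) : Prop :=
  ∀ I : Preord.{v}, IsCardinalDirected κ I →
    ∀ F : I ⥤ C, SubDiagram Obj Hom F → ∃ c : Cocone F, SubIsColimit Obj Hom c

/-- The subcategory determined by `Obj` and `Hom` is a `κ`-accessible category:
it has `κ`-directed colimits and every object is a `κ`-directed colimit of
`κ`-presentable objects of the subcategory. -/
def SubAccessible (κ : Cardinal.{v}) : Prop :=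
  SubHasDirectedColimits Obj Hom κ ∧
    ∀ X : C, Obj X → ∃ (I : Preord.{v}) (F : I ⥤ C) (c : Cocone F),
      IsCardinalDirected κ I ∧ SubDiagram Obj Hom F ∧
      (∀ i, SubPresentable Obj Hom κ (F.obj i)) ∧ SubIsColimit Obj Hom c ∧ c.pt = X

/-- The subcategory determined by `Obj` and `Hom` is closed under `κ`-directed colimits in `C`. -/
def SubClosed (κ : Cardinal.{v}) : Prop :=
  ∀ I : Preord.{v}, IsCardinalDirected κ I →
    ∀ F : I ⥤ C, SubDiagram Obj Hom F →
      ∀ c : Cocone F, IsColimit c → SubIsColimit Obj Hom c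

end Sub

section Access

variable (K : Type u) [Category.{v} K]

/-- `K` is a `κ`-accessible category. -/
def AccessibleCat (κ : Cardinal.{v}) : Prop :=
  SubAccessible (fun _ : K => True) (fun _ _ _ => True) κ

/-- `A` is a `κ`-presentable object of `K`. -/
def PresentableObj (κ : Cardinal.{v}) (A : K) : Prop :=
  SubPresentable (fun _ : K => True) (fun _ _ _ => True) κ A

variable {K}
variable (M : MorphismProperty K)

/-- `(K, M)` is `κ`-continuous: the wide subcategory `K_M` is closed under `κ`-directed
colimits in `K`. -/
def MContinuous (κ : Cardinal.{v}) : Prop :=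
  SubClosed (fun _ : K => True) M κ

/-- `(K, M)` is a `κ`-accessible cellular category: it is `κ`-continuous and both `K` and the
wide subcategory `K_M` are `κ`-accessible. -/
def MAccessible (κ : Cardinal.{v}) : Prop :=
  MContinuous M κ ∧ AccessibleCat K κ ∧ SubAccessible (fun _ : K => True) M κ

/-- The morphisms of `M` with `κ`-presentable domain and codomain. -/
def MBetweenPresentable (κ : Cardinal.{v}) : MorphismProperty K :=
  fun A B f => M f ∧ PresentableObj K κ A ∧ PresentableObj K κ B

end Access

section Cof

variable {K : Type u} [Category.{v} K]

/-- The closure of a class of morphisms under pushouts, transfinite compositions and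
retracts. -/
inductive CofClosure (X : MorphismProperty K) : ∀ {A B : K}, (A ⟶ B) → Prop
  | of {A B : K} (f : A ⟶ B) : X f → CofClosure X f
  | pushout {A B A' P : K} (f : A ⟶ B) (g : A ⟶ A') (u : B ⟶ P) (v : A' ⟶ P) :
      IsPushout f g u v → CofClosure X f → CofClosure X v
  | retract {A B A' B' : K} (f : A ⟶ B) (f' : A' ⟶ B') :
      IsArrowRetract f f' → CofClosure X f' → CofClosure X f
  | transfinite (J : Type v) (_ : LinearOrder J) (_ : OrderBot J) (_ : SuccOrder J)
      (_ : WellFoundedLT J) (F : J ⥤ K) :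
      (∀ j : J, Order.IsSuccLimit j → Nonempty (IsColimit (chainCocone F j))) →
      (∀ j : J, ¬IsMax j → CofClosure X (F.map (homOfLE (Order.le_succ j)))) →
      ∀ c : Cocone F, IsColimit c → CofClosure X (c.ι.app ⊥)

/-- The morphism property generated by a family of morphisms. -/
inductive OfFamily {ι : Type v} {A B : ι → K} (x : ∀ i, A i ⟶ B i) : ∀ {X Y : K}, (X ⟶ Y) → Prop
  | mk (i : ι) : OfFamily x (x i)

variable [HasColimits K]

/-- `(K, M)` is cofibrantly generated: `M` is the closure of a set of morphisms under
pushouts, transfinite compositions and retracts. -/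
def CofibrantlyGenerated (M : MorphismProperty K) : Prop :=
  ∃ (ι : Type v) (A B : ι → K) (x : ∀ i, A i ⟶ B i),
    ∀ {X Y : K} (f : X ⟶ Y), M f ↔ CofClosure (fun _ _ g => OfFamily x g) f

end Cof


/-!
The map from `B ⊔_A E` to `F'` factors through the pushout `D ⊔_C E`. Its first factor is the
pushout of the gap map `B ⊔_A C ⟶ D` of the left square along `B ⊔_A C ⟶ B ⊔_A E`, and its second
factor is the gap map `D ⊔_C E ⟶ F'` of the right square.
-/

section Pushout

variable {K : Type*} [Category* K]

lemma pushout_map_desc {A B C A' B' C' X : K} {f : A ⟶ B} {g : A ⟶ C} {f' : A' ⟶ B'}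
    {g' : A' ⟶ C'} [HasPushout f g] [HasPushout f' g'] {a : A ⟶ A'} {b : B ⟶ B'} {c : C ⟶ C'}
    (hf : f ≫ b = a ≫ f') (hg : g ≫ c = a ≫ g') {h : B' ⟶ X} {k : C' ⟶ X}
    (w : f' ≫ h = g' ≫ k) :
    pushout.map f g f' g' b c a hf hg ≫ pushout.desc h k w =
      pushout.desc (b ≫ h) (c ≫ k) (by rw [reassoc_of% hf, reassoc_of% hg, w]) := by
  ext <;> simp only [pushout.inl_desc, pushout.inr_desc, pushout.inl_desc_assoc,
    pushout.inr_desc_assoc, Category.assoc]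

variable {A B C D E : K} (f : A ⟶ B) (g : A ⟶ C) (g' : C ⟶ E) [HasPushout f g]
  [HasPushout f (g ≫ g')]

lemma isPushout_inr_pushout_map :
    IsPushout (pushout.inr f g) g'
      (pushout.map f g f (g ≫ g') (𝟙 B) g' (𝟙 A) (by simp) (by simp))
      (pushout.inr f (g ≫ g')) :=
  .of_top (by simpa [pushout.inl_desc] using IsPushout.of_hasPushout f (g ≫ g'))
    (pushout.inr_desc _ _ _) (.of_hasPushout f g)

lemma isPushout_pushout_desc_pushout_map {u : B ⟶ D} {v : C ⟶ D} [HasPushout v g']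
    (w : f ≫ u = g ≫ v) :
    IsPushout (pushout.desc u v w)
      (pushout.map f g f (g ≫ g') (𝟙 B) g' (𝟙 A) (by simp) (by simp))
      (pushout.inl v g')
      (pushout.map f (g ≫ g') v g' u (𝟙 E) g w (by simp)) := by
  have hcomm : pushout.desc u v w ≫ pushout.inl v g' =
      pushout.map f g f (g ≫ g') (𝟙 B) g' (𝟙 A) (by simp) (by simp) ≫
        pushout.map f (g ≫ g') v g' u (𝟙 E) g w (by simp) := by
    ext <;> simp [pushout.inl_desc, pushout.inr_desc, pushout.inl_desc_assoc,
      pushout.inr_desc_assoc, pushout.condition]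
  have houter : IsPushout (pushout.inr f g ≫ pushout.desc u v w) g' (pushout.inl v g')
      (pushout.inr f (g ≫ g') ≫ pushout.map f (g ≫ g') v g' u (𝟙 E) g w (by simp)) := by
    simpa [pushout.inr_desc] using IsPushout.of_hasPushout v g'
  exact .of_left houter hcomm (isPushout_inr_pushout_map f g g')

end Pushout

instance CellularCategory.isStableUnderComposition {K : Type u} [Category.{v} K] [HasColimits K]
    (M : MorphismProperty K) [CellularCategory K M] : M.IsStableUnderComposition where
  comp_mem := CellularCategory.comp_mem

instance CellularCategory.isStableUnderCobaseChange {K : Type u} [Category.{v} K] [HasColimits K]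
    (M : MorphismProperty K) [CellularCategory K M] : M.IsStableUnderCobaseChange where
  of_isPushout sq := CellularCategory.pushout_mem _ _ _ _ sq.flip

theorem cellularSquares_transitive_general {K : Type u} [Category.{v} K] [HasColimits K]
    (M : MorphismProperty K) [M.IsStableUnderComposition] [M.IsStableUnderCobaseChange]
    {A B C D E F' : K} {f : A ⟶ B} {g : A ⟶ C} {u : B ⟶ D} {v : C ⟶ D}
    {g' : C ⟶ E} {u' : D ⟶ F'} {v' : E ⟶ F'}
    (h₁ : IsCellularSquare M f g u v) (h₂ : IsCellularSquare M v g' u' v') :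
    IsCellularSquare M f (g ≫ g') (u ≫ u') v' := by
  obtain ⟨w₁, hgap₁⟩ := h₁
  obtain ⟨w₂, hgap₂⟩ := h₂
  have hmap : M (pushout.map f (g ≫ g') v g' u (𝟙 E) g w₁ (by simp)) :=
    M.of_isPushout (isPushout_pushout_desc_pushout_map f g g' w₁).flip hgap₁
  have w : f ≫ u ≫ u' = (g ≫ g') ≫ v' := by
    rw [reassoc_of% w₁, w₂, Category.assoc]
  have hfactor : pushout.map f (g ≫ g') v g' u (𝟙 E) g w₁ (by simp) ≫ pushout.desc u' v' w₂ =
      pushout.desc (u ≫ u') v' w := by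
    simp only [pushout_map_desc, Category.id_comp]
  exact ⟨w, hfactor ▸ M.comp_mem _ _ hmap hgap₂⟩

/-- In a cellular category, cellular squares are transitive: the horizontal
composition of two cellular squares is a cellular square. -/
theorem cellularSquares_transitive
    {K : Type u} [Category.{v} K] [HasColimits K] (M : MorphismProperty K)
    [CellularCategory K M]
    {A B C D E F' : K} (f : A ⟶ B) (g : A ⟶ C) (u : B ⟶ D) (v : C ⟶ D)
    (g' : C ⟶ E) (u' : D ⟶ F') (v' : E ⟶ F')
    (hf : M f) (hg : M g) (hu : M u) (hv : M v) (hg' : M g') (hu' : M u') (hv' : M v')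
    (h₁ : IsCellularSquare M f g u v) (h₂ : IsCellularSquare M v g' u' v') :
    IsCellularSquare M f (g ≫ g') (u ≫ u') v' :=
  cellularSquares_transitive_general M h₁ h₂

end Paper
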